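/- Let α ≥ 1, β ∈ [0,1], p ∈ (1,∞), and let s be the smallest positive integer with s > α + β − 1. Consider the points a_{k,m} = (1 − 2^{−k})·e^{i m 2^{−k}} for k ∈ ℕ and 1 ≤ m ≤ ⌊2^{kβ}⌋, and define the positive Borel measure λ = ∑_{k≥1} ∑_{m=1}^{⌊2^{kβ}⌋} ⌊2^{αk}⌋ · 2^{−k(s+1)} · δ_{a_{k,m}} on the closed unit disc (where δ_a is the unit Dirac mass at a). Then there exist constants c > 0 and δ₀ > 0 such that for all δ ∈ (0, δ₀): (∫₀^{2π} λ(C(φ,δ))^p dφ)^{1/p} ≥ c · δ^{s+1−α−(β−1)/p}. -/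

import Mathlib

open MeasureTheory Complex
open scoped ENNReal

/-- The Carleson box `C(φ,δ) = {ζ ∈ closure 𝔻 : |ζ| ≥ 1-δ, |arg ζ - φ| ≤ πδ}`
(the angular condition is expressed via a representative `θ` of the argument,
so that it is `2π`-periodic in `φ`). -/
noncomputable def carlesonBox (φ δ : ℝ) : Set ℂ :=
  {ζ : ℂ | ‖ζ‖ ≤ 1 ∧ 1 - δ ≤ ‖ζ‖ ∧
    ∃ θ : ℝ, |θ - φ| ≤ Real.pi * δ ∧
      ζ = (‖ζ‖ : ℂ) * Complex.exp (θ * Complex.I)}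

/-- The points `a_{k,m} = (1-2^{-k})·e^{i·m·2^{-k}}`. -/
noncomputable def aPt (k m : ℕ) : ℂ :=
  ((1 - (2 : ℝ) ^ (-(k : ℝ)) : ℝ) : ℂ) *
    Complex.exp (((m : ℝ) * (2 : ℝ) ^ (-(k : ℝ)) : ℝ) * Complex.I)

-- The measure `λ = ∑_{k≥1} ∑_{m=1}^{⌊2^{kβ}⌋} ⌊2^{αk}⌋·2^{-k(s+1)}·δ_{a_{k,m}}`,
-- as a set function.
open Classical in
noncomputable def exLam (α β : ℝ) (s : ℕ) (M : Set ℂ) : ℝ≥0∞ :=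
  ∑' k : ℕ, ∑' m : ℕ,
    if 1 ≤ k ∧ 1 ≤ m ∧ m ≤ Nat.floor ((2 : ℝ) ^ ((k : ℝ) * β)) ∧ aPt k m ∈ M then
      (Nat.floor ((2 : ℝ) ^ (α * (k : ℝ))) : ℝ≥0∞) *
        ENNReal.ofReal ((2 : ℝ) ^ (-(k : ℝ) * ((s : ℝ) + 1)))
    else 0


lemma aux_fin (α β : ℝ) (s : ℕ) (hsgt : α + β - 1 < (s : ℝ)) (M : Set ℂ) :
    exLam α β s M ≤ exLam α β s Set.univ ∧ exLam α β s Set.univ < ⊤ := by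
  constructor
  · unfold exLam
    refine ENNReal.tsum_le_tsum fun k => ENNReal.tsum_le_tsum fun m => ?_
    split_ifs with h1 h2
    · exact le_rfl
    · exact absurd ⟨h1.1, h1.2.1, h1.2.2.1, Set.mem_univ _⟩ h2
    · exact bot_le
    · exact le_rfl
  · have hr : (2 : ℝ) ^ (α + β - s - 1) < 1 :=
      Real.rpow_lt_one_of_one_lt_of_neg (by norm_num) (by linarith)
    refine lt_of_le_of_lt (b := ∑' k : ℕ, (ENNReal.ofReal ((2 : ℝ) ^ (α + β - s - 1))) ^ k) ?_ ?_
    · unfold exLam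
      refine ENNReal.tsum_le_tsum fun k => ?_
      set N := Nat.floor ((2 : ℝ) ^ ((k : ℝ) * β)) with hN
      set w := (Nat.floor ((2 : ℝ) ^ (α * (k : ℝ))) : ℝ≥0∞) *
        ENNReal.ofReal ((2 : ℝ) ^ (-(k : ℝ) * ((s : ℝ) + 1))) with hw
      have h1 : (∑' m : ℕ, if m ∈ Finset.Icc 1 N then w else 0) = N * w := by
        rw [tsum_eq_sum (s := Finset.Icc 1 N) (fun m hm => by simp only [hm, if_false])]
        rw [Finset.sum_congr rfl (fun m hm => if_pos hm)]
        simp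
      refine le_trans (b := (∑' m : ℕ, if m ∈ Finset.Icc 1 N then w else 0)) ?_ ?_
      · refine ENNReal.tsum_le_tsum fun m => ?_
        split_ifs with h1 h2
        · exact le_rfl
        · exact absurd (Finset.mem_Icc.2 ⟨h1.2.1, h1.2.2.1⟩) h2
        · exact bot_le
        · exact le_rfl
      · rw [h1, hw]
        have e1 : (N : ℝ≥0∞) ≤ ENNReal.ofReal ((2 : ℝ) ^ ((k : ℝ) * β)) := by
          rw [← ENNReal.ofReal_natCast]
          exact ENNReal.ofReal_le_ofReal (Nat.floor_le (by positivity))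
        have e2 : (Nat.floor ((2 : ℝ) ^ (α * (k : ℝ))) : ℝ≥0∞) ≤
            ENNReal.ofReal ((2 : ℝ) ^ (α * (k : ℝ))) := by
          rw [← ENNReal.ofReal_natCast]
          exact ENNReal.ofReal_le_ofReal (Nat.floor_le (by positivity))
        refine (mul_le_mul' e1 (mul_le_mul' e2 le_rfl)).trans (le_of_eq ?_)
        rw [← ENNReal.ofReal_mul (by positivity), ← ENNReal.ofReal_mul (by positivity),
          ← ENNReal.ofReal_pow (by positivity), ← Real.rpow_natCast, ← Real.rpow_mul (by norm_num),
          ← Real.rpow_add (by norm_num), ← Real.rpow_add (by norm_num)]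
        congr 2
        ring
    · rw [ENNReal.tsum_geometric]
      rw [ENNReal.inv_lt_top]
      rw [tsub_pos_iff_lt]
      simpa using hr

lemma aux_norm (k m : ℕ) : ‖aPt k m‖ = 1 - (2 : ℝ) ^ (-(k : ℝ)) := by
  unfold aPt
  rw [norm_mul, Complex.norm_exp_ofReal_mul_I, mul_one, Complex.norm_real, Real.norm_eq_abs,
    abs_of_nonneg]
  have : (2 : ℝ) ^ (-(k : ℝ)) ≤ 1 := Real.rpow_le_one_of_one_le_of_nonpos (by norm_num) (by simp)
  linarith

lemma aux_meas (δ : ℝ) (k m : ℕ) (hk : 1 ≤ k) :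
    MeasurableSet {φ : ℝ | aPt k m ∈ carlesonBox φ δ} := by
  have hx : (2 : ℝ) ^ (-(k : ℝ)) < 1 :=
    Real.rpow_lt_one_of_one_lt_of_neg (by norm_num) (by simp; omega)
  have hne : ((1 - (2 : ℝ) ^ (-(k : ℝ)) : ℝ) : ℂ) ≠ 0 := by
    exact_mod_cast (by linarith : (1 - (2 : ℝ) ^ (-(k : ℝ)) : ℝ) ≠ 0)
  set t : ℝ := (m : ℝ) * (2 : ℝ) ^ (-(k : ℝ)) with ht
  have key : {φ : ℝ | aPt k m ∈ carlesonBox φ δ} =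
      {φ : ℝ | ‖aPt k m‖ ≤ 1 ∧ 1 - δ ≤ ‖aPt k m‖} ∩
      ⋃ n : ℤ, {φ : ℝ | |t + n * (2 * Real.pi) - φ| ≤ Real.pi * δ} := by
    ext φ
    simp only [carlesonBox, Set.mem_ofPred_eq, Set.mem_inter_iff, Set.mem_iUnion, and_assoc]
    refine and_congr_right fun _ => and_congr_right fun _ => ?_
    have hh : ∀ θ : ℝ, aPt k m = (‖aPt k m‖ : ℂ) * Complex.exp (θ * Complex.I) ↔
        ∃ n : ℤ, θ = t + n * (2 * Real.pi) := by
      intro θ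
      rw [aux_norm]
      unfold aPt
      rw [mul_right_inj' hne, eq_comm, Complex.exp_eq_exp_iff_exists_int]
      refine exists_congr fun n => ?_
      rw [← ht]
      constructor
      · intro h
        have h2 : ((θ : ℂ)) * Complex.I = ((t + n * (2 * Real.pi) : ℝ) : ℂ) * Complex.I := by
          rw [h]; push_cast; ring
        have := mul_right_cancel₀ Complex.I_ne_zero h2
        exact_mod_cast this
      · intro h
        rw [h]; push_cast; ring
    constructor
    · rintro ⟨θ, h1, h2⟩
      obtain ⟨n, rfl⟩ := (hh θ).1 h2
      exact ⟨n, h1⟩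
    · rintro ⟨n, h⟩
      exact ⟨_, h, (hh _).2 ⟨n, rfl⟩⟩
  rw [key]
  refine MeasurableSet.inter (MeasurableSet.const _) (MeasurableSet.iUnion fun n => ?_)
  exact (isClosed_le (by fun_prop) (by fun_prop)).measurableSet

lemma aux_measurable (α β δ : ℝ) (s : ℕ) :
    Measurable fun φ : ℝ => exLam α β s (carlesonBox φ δ) := by
  unfold exLam
  refine Measurable.tsum fun k => Measurable.tsum fun m => ?_
  refine Measurable.ite ?_ measurable_const measurable_const
  by_cases hk : 1 ≤ k
  · have : {a : ℝ | 1 ≤ k ∧ 1 ≤ m ∧ m ≤ Nat.floor ((2 : ℝ) ^ ((k : ℝ) * β)) ∧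
        aPt k m ∈ carlesonBox a δ} =
        {a : ℝ | 1 ≤ k ∧ 1 ≤ m ∧ m ≤ Nat.floor ((2 : ℝ) ^ ((k : ℝ) * β))} ∩
          {φ : ℝ | aPt k m ∈ carlesonBox φ δ} := by
      ext a; simp [and_assoc]
    rw [this]
    exact (MeasurableSet.const _).inter (aux_meas δ k m hk)
  · simp [hk]

lemma aux_lower (α β : ℝ) (hα : 1 ≤ α) (hβ0 : 0 ≤ β) (s : ℕ)
    (hsgt : α + β - 1 < (s : ℝ)) (k : ℕ) (hk : 1 ≤ k) (δ : ℝ)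
    (hx : (2 : ℝ) ^ (-(k : ℝ)) ≤ δ) (φ : ℝ) (h0 : 0 ≤ φ)
    (h1 : φ ≤ ((2 : ℝ) ^ (-(k : ℝ))) ^ (1 - β)) :
    1 / 2 * ((2 : ℝ) ^ (-(k : ℝ))) ^ ((s : ℝ) + 1 - α) ≤
      (exLam α β s (carlesonBox φ δ)).toReal := by
  set x := (2 : ℝ) ^ (-(k : ℝ)) with hxd
  have hx0 : 0 < x := by positivity
  have hx1 : x ≤ 1 := Real.rpow_le_one_of_one_le_of_nonpos (by norm_num) (by simp)
  have hkβ : x⁻¹ * x ^ (1 - β) = (2 : ℝ) ^ ((k : ℝ) * β) := by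
    rw [hxd, ← Real.rpow_mul (by norm_num), ← Real.rpow_neg (by norm_num),
      ← Real.rpow_add (by norm_num)]
    congr 1; ring
  obtain ⟨m, hm1, hm2, hm3⟩ : ∃ m : ℕ, 1 ≤ m ∧ m ≤ Nat.floor ((2 : ℝ) ^ ((k : ℝ) * β)) ∧
      |(m : ℝ) * x - φ| ≤ x := by
    have hq : φ / x * x = φ := div_mul_cancel₀ _ hx0.ne'
    by_cases hc : φ / x < 1
    · refine ⟨1, le_rfl, ?_, ?_⟩
      · rw [Nat.le_floor_iff (by positivity)]
        simpa using Real.one_le_rpow (by norm_num : (1 : ℝ) ≤ 2) (by positivity)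
      · have : φ < x := by rwa [div_lt_one hx0] at hc
        rw [abs_le]; constructor <;> push_cast <;> linarith
    · push Not at hc
      refine ⟨Nat.floor (φ / x), Nat.le_floor (by simpa using hc), Nat.floor_le_floor ?_, ?_⟩
      · rw [← hkβ, div_eq_inv_mul]
        gcongr
      · have a1 := Nat.floor_le (by positivity : 0 ≤ φ / x)
        have a2 := Nat.lt_floor_add_one (φ / x)
        have a3 := mul_le_mul_of_nonneg_right a1 hx0.le
        have a4 := mul_le_mul_of_nonneg_right a2.le hx0.le
        rw [abs_le]; constructor <;> linarith
  have hδ : 0 < δ := lt_of_lt_of_le hx0 hx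
  have hmem : aPt k m ∈ carlesonBox φ δ := by
    refine ⟨?_, ?_, (m : ℝ) * x, ?_, ?_⟩
    · rw [aux_norm, ← hxd]; linarith
    · rw [aux_norm, ← hxd]; linarith
    · refine hm3.trans (hx.trans ?_)
      nlinarith [Real.pi_gt_three]
    · rw [aux_norm]; rfl
  have hterm : (Nat.floor ((2 : ℝ) ^ (α * (k : ℝ))) : ℝ≥0∞) *
        ENNReal.ofReal ((2 : ℝ) ^ (-(k : ℝ) * ((s : ℝ) + 1))) ≤
        exLam α β s (carlesonBox φ δ) := by
    unfold exLam
    refine le_trans ?_ (ENNReal.le_tsum k)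
    refine le_trans ?_ (ENNReal.le_tsum m)
    rw [if_pos ⟨hk, hm1, hm2, hmem⟩]
  have hf := aux_fin α β s hsgt (carlesonBox φ δ)
  have := ENNReal.toReal_mono (hf.1.trans_lt hf.2).ne hterm
  refine le_trans ?_ this
  rw [ENNReal.toReal_mul, ENNReal.toReal_natCast, ENNReal.toReal_ofReal (by positivity)]
  have hy : (1 : ℝ) ≤ (2 : ℝ) ^ (α * (k : ℝ)) :=
    Real.one_le_rpow (by norm_num) (by positivity)
  have hfl : 1 / 2 * (2 : ℝ) ^ (α * (k : ℝ)) ≤ (Nat.floor ((2 : ℝ) ^ (α * (k : ℝ))) : ℝ) := by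
    have b1 : (1 : ℝ) ≤ (Nat.floor ((2 : ℝ) ^ (α * (k : ℝ))) : ℝ) := by
      exact_mod_cast Nat.le_floor (by simpa using hy)
    have b2 := Nat.lt_floor_add_one ((2 : ℝ) ^ (α * (k : ℝ)))
    linarith
  refine le_trans (le_of_eq ?_) (mul_le_mul_of_nonneg_right hfl (by positivity))
  rw [mul_assoc, ← Real.rpow_add (by norm_num), hxd, ← Real.rpow_mul (by norm_num)]
  congr 2; ring

/-- For `α ≥ 1`, `β ∈ [0,1]`, `p ∈ (1,∞)` and `s` the smallest positive
integer with `s > α + β - 1`, the measure `λ` above satisfies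
`(∫₀^{2π} λ(C(φ,δ))^p dφ)^{1/p} ≥ c·δ^{s+1-α-(β-1)/p}` for all small `δ > 0`. -/
theorem stmt17 (α β p : ℝ) (hα : 1 ≤ α) (hβ0 : 0 ≤ β) (hβ1 : β ≤ 1) (hp : 1 < p)
    (s : ℕ) (hs0 : 0 < s) (hsgt : α + β - 1 < (s : ℝ))
    (hsmin : ∀ t : ℕ, 0 < t → α + β - 1 < (t : ℝ) → s ≤ t) :
    ∃ c : ℝ, 0 < c ∧ ∃ δ₀ : ℝ, 0 < δ₀ ∧ ∀ δ : ℝ, 0 < δ → δ < δ₀ →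
      c * δ ^ ((s : ℝ) + 1 - α - (β - 1) / p) ≤
        (∫ φ in (0 : ℝ)..(2 * Real.pi), (exLam α β s (carlesonBox φ δ)).toReal ^ p) ^ (1 / p) := by
  have hF : 0 ≤ (s : ℝ) + 1 - α - (β - 1) / p := by
    have : (β - 1) / p ≤ 0 := div_nonpos_of_nonpos_of_nonneg (by linarith) (by linarith)
    linarith
  set F := (s : ℝ) + 1 - α - (β - 1) / p with hFd
  refine ⟨1 / 2 * (1 / 2) ^ F, by positivity, 1, one_pos, fun δ hδ hδ1 => ?_⟩
  obtain ⟨n, hn1, hn2⟩ := exists_nat_pow_near_of_lt_one hδ hδ1.le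
    (by norm_num : (0 : ℝ) < 1 / 2) (by norm_num)
  have hxe : (2 : ℝ) ^ (-((n + 1 : ℕ) : ℝ)) = (1 / 2) ^ (n + 1) := by
    rw [Real.rpow_neg (by norm_num), Real.rpow_natCast]; simp
  have hlow := aux_lower α β hα hβ0 s hsgt (n + 1) (by omega) δ (by rw [hxe]; exact hn1.le)
  rw [hxe] at hlow
  have hx2 : 1 / 2 * δ ≤ (1 / 2 : ℝ) ^ (n + 1) := by rw [pow_succ]; linarith
  have hx1 : (1 / 2 : ℝ) ^ (n + 1) ≤ 1 := pow_le_one₀ (by norm_num) (by norm_num)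
  have hx0 : 0 < (1 / 2 : ℝ) ^ (n + 1) := by positivity
  set x := (1 / 2 : ℝ) ^ (n + 1) with hxd
  set f : ℝ → ℝ := fun φ => (exLam α β s (carlesonBox φ δ)).toReal ^ p with hf
  have hfm : Measurable f := ((aux_measurable α β δ s).ennreal_toReal).pow_const p
  have hf0 : ∀ φ, 0 ≤ f φ := fun φ => Real.rpow_nonneg ENNReal.toReal_nonneg _
  have hfb : ∀ φ, f φ ≤ (exLam α β s Set.univ).toReal ^ p := fun φ => by
    have h := aux_fin α β s hsgt (carlesonBox φ δ)
    exact Real.rpow_le_rpow ENNReal.toReal_nonneg (ENNReal.toReal_mono h.2.ne h.1) (by linarith)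
  have hint : ∀ a b : ℝ, IntervalIntegrable f volume a b := fun a b => by
    refine (intervalIntegrable_const (c := (exLam α β s Set.univ).toReal ^ p)).mono_fun
      hfm.aestronglyMeasurable (Filter.Eventually.of_forall fun φ => ?_)
    beta_reduce
    rw [Real.norm_of_nonneg (hf0 φ)]
    exact (hfb φ).trans (Real.le_norm_self _)
  set y := x ^ (1 - β) with hy
  have hy0 : 0 < y := by positivity
  have hy1 : y ≤ 1 := Real.rpow_le_one hx0.le hx1 (by linarith)
  have hI : y * (1 / 2 * x ^ ((s : ℝ) + 1 - α)) ^ p ≤ ∫ φ in (0 : ℝ)..(2 * Real.pi), f φ := by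
    rw [← intervalIntegral.integral_add_adjacent_intervals (hint 0 y) (hint y (2 * Real.pi))]
    have i1 : 0 ≤ ∫ φ in y..(2 * Real.pi), f φ :=
      intervalIntegral.integral_nonneg_of_forall (by linarith [Real.pi_gt_three]) hf0
    have i2 : (∫ _φ in (0 : ℝ)..y, (1 / 2 * x ^ ((s : ℝ) + 1 - α)) ^ p) ≤ ∫ φ in (0 : ℝ)..y, f φ :=
      intervalIntegral.integral_mono_on hy0.le intervalIntegrable_const (hint 0 y) fun φ hφ =>
        Real.rpow_le_rpow (by positivity) (hlow φ hφ.1 hφ.2) (by linarith)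
    rw [intervalIntegral.integral_const, smul_eq_mul, sub_zero] at i2
    linarith
  have hp0 : p ≠ 0 := by linarith
  refine le_trans ?_ (Real.rpow_le_rpow (by positivity) hI (by positivity))
  rw [Real.mul_rpow (by positivity) (by positivity), ← Real.rpow_mul (by positivity) p,
    mul_one_div_cancel hp0, Real.rpow_one, hy, ← Real.rpow_mul hx0.le]
  have e : x ^ ((1 - β) * (1 / p)) * (1 / 2 * x ^ ((s : ℝ) + 1 - α)) = 1 / 2 * x ^ F := by
    rw [mul_left_comm, ← Real.rpow_add hx0]
    congr 2
    rw [hFd]; ring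
  rw [e, mul_assoc, ← Real.mul_rpow (by norm_num) hδ.le]
  have := Real.rpow_le_rpow (by positivity) hx2 hF
  linarith
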